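/- For all constants c > 0, ε > 0 and all (x,H) ∈ ℝ², the observer gain condition p₁ := −D ε ∂q/∂y (x,H) − D ∂²ψ/∂x² (x,H) − c ψ(x,H) evaluates to the explicit formula p₁ = (cλ/β) x Φ₁(x,H) + λ² x ( ε H/D − 3/β ) Φ₂(x,H) + (λ³/(Dβ)) x³ Φ₃(x,H). -/

import Mathlib

/-- `Φ_j(x,y) = 2^{-j} ∑_{m=0}^∞ ((λ/(4D))(y² − x²))^m / (m! (m+j)!)`,
which equals `I_j(z)/z^j` with `z = √((λ/D)(y² − x²))`. -/
noncomputable def Phi (D lam : ℝ) (j : ℕ) (x y : ℝ) : ℝ :=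
  (1 / 2 ^ j) *
    ∑' m : ℕ, (lam / (4 * D) * (y ^ 2 - x ^ 2)) ^ m / (m.factorial * (m + j).factorial : ℝ)

/-- The direct backstepping kernel `q(x,y) = −(λ/D) x Φ₁(x,y)`. -/
noncomputable def qker (D lam : ℝ) (x y : ℝ) : ℝ :=
  -(lam / D) * x * Phi D lam 1 x y

/-- `ψ(x,H) = (D/β) q(x,H)`. -/
noncomputable def psiK (D lam beta : ℝ) (x H : ℝ) : ℝ :=
  D / beta * qker D lam x H

/-!
The function `Φ_j` is `2^{-j} C_j(u)` with `u = (λ/(4D))(y² − x²)`, where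
`C_j(u) = ∑ u^m / (m! (m+j)!)`. Differentiating an exponential generating series
`∑ a_m u^m / m!` shifts its coefficients, so `C_j' = C_{j+1}`, and the chain rule gives
`∂_y Φ_j = (λ/D) y Φ_{j+1}` and `∂_x Φ_j = −(λ/D) x Φ_{j+1}`. The formula for `p₁` follows by
differentiating `x Φ₁` once in `y` and twice in `x`.
-/

open scoped Nat

theorem hasDerivAt_tsum_pow_div_factorial_smul {𝕜 E : Type*} [RCLike 𝕜] [NormedAddCommGroup E]
    [NormedSpace 𝕜 E] [CompleteSpace E] {a : ℕ → E} {r : ℝ} {z : 𝕜} (hz : ‖z‖ < r)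
    (ha : Summable fun m : ℕ => r ^ m / m ! * ‖a (m + 1)‖) :
    HasDerivAt (fun w : 𝕜 => ∑' m : ℕ, (w ^ m / (m ! : 𝕜)) • a m)
      (∑' m : ℕ, (z ^ m / (m ! : 𝕜)) • a (m + 1)) z := by
  let term' (m : ℕ) (w : 𝕜) : E := (m * w ^ (m - 1) / (m ! : 𝕜)) • a m
  let bound (m : ℕ) : ℝ := m * r ^ (m - 1) / m ! * ‖a m‖
  have term'_succ (m : ℕ) : term' (m + 1) z = (z ^ m / (m ! : 𝕜)) • a (m + 1) := by
    have hm : (m : 𝕜) + 1 ≠ 0 := Nat.cast_add_one_ne_zero m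
    simp [term', Nat.factorial_succ, mul_div_mul_left _ _ hm]
  have bound_succ (m : ℕ) : bound (m + 1) = r ^ m / m ! * ‖a (m + 1)‖ := by
    have hm : (m : ℝ) + 1 ≠ 0 := Nat.cast_add_one_ne_zero m
    simp [bound, Nat.factorial_succ, mul_div_mul_left _ _ hm]
  have summable_bound : Summable bound := by
    rw [← summable_nat_add_iff 1]
    simpa only [bound_succ] using ha
  have norm_term'_le (m : ℕ) (w : 𝕜) (hw : w ∈ Metric.ball (0 : 𝕜) r) :
      ‖term' m w‖ ≤ bound m := by
    have hwr : ‖w‖ ≤ r := (mem_ball_zero_iff.1 hw).le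
    simp only [term', bound, norm_smul, norm_div, norm_mul, norm_pow, RCLike.norm_natCast]
    gcongr
  have summable_at_zero : Summable fun m : ℕ => ((0 : 𝕜) ^ m / (m ! : 𝕜)) • a m :=
    summable_of_ne_finset_zero (s := {0}) fun m hm => by simp_all
  have hzr : z ∈ Metric.ball (0 : 𝕜) r := mem_ball_zero_iff.2 hz
  have hderiv : HasDerivAt (fun w : 𝕜 => ∑' m : ℕ, (w ^ m / (m ! : 𝕜)) • a m)
      (∑' m, term' m z) z :=
    hasDerivAt_tsum_of_isPreconnected summable_bound Metric.isOpen_ball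
      (convex_ball 0 r).isPreconnected
      (fun m w _ => ((hasDerivAt_pow m w).div_const _).smul_const (a m)) norm_term'_le
      (Metric.mem_ball_self ((norm_nonneg z).trans_lt hz)) summable_at_zero hzr
  have summable_term' : Summable fun m => term' m z :=
    .of_norm_bounded summable_bound fun m => norm_term'_le m z hzr
  have term'_zero : term' 0 z = 0 := by simp [term']
  simpa only [summable_term'.tsum_eq_zero_add, term'_zero, zero_add, term'_succ] using hderiv

/-- The Bessel–Clifford function `C_j(z) = ∑ z^m / (m! (m+j)!)` of order `j`, normalised so that
`I_j(w) = (w/2)^j C_j(w²/4)` and `J_j(w) = (w/2)^j C_j(−w²/4)`. -/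
noncomputable def besselClifford {𝕜 : Type*} [RCLike 𝕜] (j : ℕ) (z : 𝕜) : 𝕜 :=
  ∑' m : ℕ, z ^ m / (m ! * (m + j)! : 𝕜)

theorem hasDerivAt_besselClifford {𝕜 : Type*} [RCLike 𝕜] (j : ℕ) (z : 𝕜) :
    HasDerivAt (besselClifford j) (besselClifford (j + 1) z) z := by
  have norm_coeff_le (m : ℕ) : ‖((m + 1 + j)! : 𝕜)⁻¹‖ ≤ 1 := by
    rw [norm_inv, RCLike.norm_natCast]
    exact inv_le_one_of_one_le₀ (mod_cast Nat.factorial_pos _)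
  have summable_coeff :
      Summable fun m : ℕ => (‖z‖ + 1) ^ m / m ! * ‖((m + 1 + j)! : 𝕜)⁻¹‖ :=
    .of_nonneg_of_le (fun m => by positivity)
      (fun m => mul_le_of_le_one_right (by positivity) (norm_coeff_le m))
      (Real.summable_pow_div_factorial (‖z‖ + 1))
  have hderiv := hasDerivAt_tsum_pow_div_factorial_smul
    (a := fun m : ℕ => ((m + j)! : 𝕜)⁻¹) (lt_add_one ‖z‖) summable_coeff
  unfold besselClifford
  simpa only [smul_eq_mul, div_mul_eq_div_div, div_eq_mul_inv, mul_inv,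
    mul_assoc, add_assoc, add_comm 1 j] using hderiv

theorem Phi_eq_besselClifford (D lam : ℝ) (j : ℕ) (x y : ℝ) :
    Phi D lam j x y = 1 / 2 ^ j * besselClifford j (lam / (4 * D) * (y ^ 2 - x ^ 2)) :=
  rfl

theorem Phi_swap (D lam : ℝ) (j : ℕ) (x y : ℝ) : Phi D lam j y x = Phi D (-lam) j x y := by
  simp only [Phi_eq_besselClifford]
  congr 2
  ring

theorem hasDerivAt_Phi_right (D lam : ℝ) (j : ℕ) (x y : ℝ) :
    HasDerivAt (fun y => Phi D lam j x y) (lam / D * y * Phi D lam (j + 1) x y) y := by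
  have hu : HasDerivAt (fun y : ℝ => lam / (4 * D) * (y ^ 2 - x ^ 2))
      (lam / (4 * D) * (2 * y)) y := by
    simpa using ((hasDerivAt_pow 2 y).sub_const (x ^ 2)).const_mul (lam / (4 * D))
  refine (((hasDerivAt_besselClifford j _).comp y hu).const_mul (1 / 2 ^ j)).congr_deriv ?_
  rw [Phi_eq_besselClifford]
  ring

theorem hasDerivAt_Phi_left (D lam : ℝ) (j : ℕ) (x y : ℝ) :
    HasDerivAt (fun x => Phi D lam j x y) (-(lam / D) * x * Phi D lam (j + 1) x y) x := by
  simpa only [Phi_swap D lam, neg_div] using hasDerivAt_Phi_right D (-lam) j y x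

theorem hasDerivAt_qker_right (D lam x y : ℝ) :
    HasDerivAt (fun y => qker D lam x y) (-(lam / D) ^ 2 * x * y * Phi D lam 2 x y) y :=
  ((hasDerivAt_Phi_right D lam 1 x y).const_mul (-(lam / D) * x)).congr_deriv (by ring)

theorem hasDerivAt_qker_left (D lam x y : ℝ) :
    HasDerivAt (fun x => qker D lam x y)
      (-(lam / D) * Phi D lam 1 x y + (lam / D) ^ 2 * (x ^ 2 * Phi D lam 2 x y)) x :=
  (((hasDerivAt_id' x).const_mul (-(lam / D))).mul
    (hasDerivAt_Phi_left D lam 1 x y)).congr_deriv (by ring)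

theorem iteratedDeriv_two_qker_left (D lam x y : ℝ) :
    iteratedDeriv 2 (fun x => qker D lam x y) x =
      3 * (lam / D) ^ 2 * x * Phi D lam 2 x y - (lam / D) ^ 3 * x ^ 3 * Phi D lam 3 x y := by
  have hderiv : deriv (fun x => qker D lam x y) = fun x =>
      -(lam / D) * Phi D lam 1 x y + (lam / D) ^ 2 * (x ^ 2 * Phi D lam 2 x y) :=
    funext fun x => (hasDerivAt_qker_left D lam x y).deriv
  have hΦ₁ := (hasDerivAt_Phi_left D lam 1 x y).const_mul (-(lam / D))
  have hx2Φ₂ := ((hasDerivAt_pow 2 x).mul (hasDerivAt_Phi_left D lam 2 x y)).const_mul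
    ((lam / D) ^ 2)
  rw [iteratedDeriv_succ, iteratedDeriv_one, hderiv]
  refine ((hΦ₁.add hx2Φ₂).congr_deriv ?_).deriv
  push_cast
  ring

theorem iteratedDeriv_two_psiK_left (D lam beta x H : ℝ) :
    iteratedDeriv 2 (fun x => psiK D lam beta x H) x =
      D / beta * (3 * (lam / D) ^ 2 * x * Phi D lam 2 x H
        - (lam / D) ^ 3 * x ^ 3 * Phi D lam 3 x H) := by
  simp only [psiK, iteratedDeriv_const_mul_field, iteratedDeriv_two_qker_left]

/-- At `−λ` the kernel `q` becomes the inverse kernel `r` and `ψ` becomes `φ`. -/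
theorem observer_gain_p1_formula_general (D lam beta c eps x H : ℝ) (hD : D ≠ 0)
    (hbeta : beta ≠ 0) :
    -D * eps * deriv (fun y => qker D lam x y) H
        - D * iteratedDeriv 2 (fun x' => psiK D lam beta x' H) x
        - c * psiK D lam beta x H =
      c * lam / beta * x * Phi D lam 1 x H
        + lam ^ 2 * x * (eps * H / D - 3 / beta) * Phi D lam 2 x H
        + lam ^ 3 / (D * beta) * x ^ 3 * Phi D lam 3 x H := by
  rw [(hasDerivAt_qker_right D lam x H).deriv, iteratedDeriv_two_psiK_left, psiK, qker]
  field_simp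
  ring

/-- The observer gain condition
`p₁ = −D ε q_y(x,H) − D ψ_xx(x,H) − c ψ(x,H)` evaluates to the explicit formula
`p₁ = (cλ/β) x Φ₁(x,H) + λ² x (ε H/D − 3/β) Φ₂(x,H) + (λ³/(Dβ)) x³ Φ₃(x,H)`. -/
theorem observer_gain_p1_formula
    (D lam beta : ℝ) (hD : 0 < D) (hlam : 0 < lam) (hbeta : 0 < beta) :
    ∀ c > (0 : ℝ), ∀ eps > (0 : ℝ), ∀ x H : ℝ,
      -D * eps * deriv (fun y => qker D lam x y) H
          - D * iteratedDeriv 2 (fun x' => psiK D lam beta x' H) x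
          - c * psiK D lam beta x H =
        c * lam / beta * x * Phi D lam 1 x H
          + lam ^ 2 * x * (eps * H / D - 3 / beta) * Phi D lam 2 x H
          + lam ^ 3 / (D * beta) * x ^ 3 * Phi D lam 3 x H :=
  fun c _ eps _ x H =>
    observer_gain_p1_formula_general D lam beta c eps x H hD.ne' hbeta.ne'
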